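/- Let k be a field of characteristic 0 with algebraic closure k̄, and let G be a finite group. Assume that every irreducible representation λ of G over k̄ can be realized over the subfield k(χ_λ) ⊆ k̄ generated over k by the values of its character χ_λ (this is the condition that every Schur index m_k(λ) equals 1). Then for every field extension L/k and every representation ρ : G → GL_n(L) with character χ, the representation ρ descends to the intermediate field k(χ) ⊆ L generated over k by the values of χ; in particular, ρ descends to a field algebraic over k, so ed(ρ) = 0. -/

import Mathlib

open Matrix

/-- The character of a matrix representation. -/
noncomputable def repChar {G L : Type*} [Group G] [Field L] {n : ℕ}
    (ρ : G →* GL (Fin n) L) (g : G) : L :=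
  Matrix.trace (ρ g : Matrix (Fin n) (Fin n) L)

/-- A matrix representation is irreducible (over the base field) if it is nonzero and the
only invariant subspaces are `⊥` and `⊤`. -/
def IsIrreducibleRep {K : Type*} [Field K] {G : Type*} [Group G] {n : ℕ}
    (ρ : G →* GL (Fin n) K) : Prop :=
  0 < n ∧ ∀ W : Submodule K (Fin n → K),
    (∀ g : G, ∀ v ∈ W, (ρ g : Matrix (Fin n) (Fin n) K).mulVec v ∈ W) → W = ⊥ ∨ W = ⊤

/-- A representation `ρ : G → GL_n(L)` descends to an intermediate field `K₀` of `L/k` if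
it is `L`-equivalent (conjugate) to the base change of some representation over `K₀`. -/
def Descends {k L : Type*} [Field k] [Field L] [Algebra k L] {G : Type*} [Group G] {n : ℕ}
    (ρ : G →* GL (Fin n) L) (K₀ : IntermediateField k L) : Prop :=
  ∃ ρ' : G →* GL (Fin n) K₀, ∃ M : GL (Fin n) L,
    ∀ g, ρ g = M * Units.map ((algebraMap K₀ L).mapMatrix).toMonoidHom (ρ' g) * M⁻¹


namespace EdZero

open Representation Module

universe u v w

section Reps

variable {K : Type u} [Field K] {G : Type v} [Group G]

/-- The representation attached to a matrix representation. -/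
noncomputable def toRep {n : ℕ} (ρ : G →* GL (Fin n) K) : Representation K G (Fin n → K) where
  toFun g := Matrix.toLin' (ρ g : Matrix (Fin n) (Fin n) K)
  map_one' := by simp; rfl
  map_mul' g h := by simp [Matrix.toLin'_mul]; rfl

lemma toRep_apply {n : ℕ} (ρ : G →* GL (Fin n) K) (g : G) (v : Fin n → K) :
    toRep ρ g v = (ρ g : Matrix (Fin n) (Fin n) K).mulVec v := by
  simp [toRep]

lemma toRep_character {n : ℕ} (ρ : G →* GL (Fin n) K) : (toRep ρ).character = repChar ρ := by
  ext g
  simp [Representation.character, toRep, repChar, Matrix.trace_toLin'_eq]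

/-- Every finite-dimensional representation comes from a matrix representation. -/
lemma exists_matrix {V : Type w} [AddCommGroup V] [Module K V] [FiniteDimensional K V]
    (σ : Representation K G V) :
    ∃ ρ : G →* GL (Fin (finrank K V)) K, Nonempty (Representation.Equiv σ (toRep ρ)) := by
  let b := Module.finBasis K V
  let m : G →* Matrix (Fin (finrank K V)) (Fin (finrank K V)) K :=
    (LinearMap.toMatrixAlgEquiv b).toAlgHom.toRingHom.toMonoidHom.comp σ
  refine ⟨m.toHomUnits, ⟨Representation.Equiv.mk b.equivFun ?_⟩⟩
  intro g
  ext v : 1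
  simp only [LinearMap.comp_apply, toRep_apply, LinearEquiv.coe_coe]
  have : ((m.toHomUnits g : GL (Fin (finrank K V)) K) : Matrix _ _ K)
      = LinearMap.toMatrix b b (σ g) := rfl
  rw [this]
  exact (LinearMap.toMatrix_mulVec_repr b b (σ g) v).symm

lemma isIrreducible_toRep {n : ℕ} (ρ : G →* GL (Fin n) K) (h : IsIrreducibleRep ρ) :
    IsIrreducible (toRep ρ) := by
  obtain ⟨hn, h⟩ := h
  have : NeZero n := ⟨hn.ne'⟩
  refine { exists_pair_ne := ⟨⊥, ⊤, ?_⟩, eq_bot_or_eq_top := ?_ }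
  · intro e
    have : (⊥ : Submodule K (Fin n → K)) = ⊤ := congrArg Subrepresentation.toSubmodule e
    exact bot_ne_top this
  · intro W
    rcases h W.toSubmodule (fun g v hv => by
      rw [← toRep_apply]; exact W.apply_mem_toSubmodule g hv) with e | e
    · left; exact Subrepresentation.toSubmodule_injective e
    · right; exact Subrepresentation.toSubmodule_injective e

lemma isIrreducibleRep_of_equiv {V : Type w} [AddCommGroup V] [Module K V]
    (σ : Representation K G V) [hσ : IsIrreducible σ] {n : ℕ} (ρ : G →* GL (Fin n) K)
    (e : Representation.Equiv σ (toRep ρ)) : IsIrreducibleRep ρ := by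
  have hne : (⊥ : Subrepresentation σ) ≠ ⊤ := bot_ne_top
  constructor
  · rcases Nat.eq_zero_or_pos n with rfl | h
    · exfalso
      apply hne
      apply Subrepresentation.toSubmodule_injective
      have : Subsingleton V := e.toLinearEquiv.toEquiv.subsingleton
      exact Subsingleton.elim _ _
    · exact h
  · intro W hW
    let W' : Subrepresentation σ := ⟨W.comap e.toLinearEquiv.toLinearMap, by
      intro g v hv
      have h1 := hW g (e v) hv
      rw [← toRep_apply] at h1
      have h2 : e (σ g v) = toRep ρ g (e v) := IntertwiningMap.isIntertwining _ _ e.toIntertwiningMap g v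
      show e (σ g v) ∈ W
      rw [h2]; exact h1⟩
    rcases hσ.eq_bot_or_eq_top W' with h | h
    · left
      have h : W.comap e.toLinearEquiv.toLinearMap = ⊥ := congrArg Subrepresentation.toSubmodule h
      rw [eq_bot_iff]
      intro x hx
      obtain ⟨y, rfl⟩ := e.toLinearEquiv.surjective x
      have : y ∈ W.comap e.toLinearEquiv.toLinearMap := hx
      rw [h, Submodule.mem_bot] at this
      rw [this, map_zero]
      exact zero_mem _
    · right
      have h : W.comap e.toLinearEquiv.toLinearMap = ⊤ := congrArg Subrepresentation.toSubmodule h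
      rw [eq_top_iff]
      intro x _
      obtain ⟨y, rfl⟩ := e.toLinearEquiv.surjective x
      have : y ∈ W.comap e.toLinearEquiv.toLinearMap := by rw [h]; trivial
      exact this

lemma char_prod {V W : Type*} [AddCommGroup V] [Module K V] [FiniteDimensional K V]
    [AddCommGroup W] [Module K W] [FiniteDimensional K W]
    (σ : Representation K G V) (τ : Representation K G W) :
    (σ.prod τ).character = σ.character + τ.character := by
  ext g
  exact LinearMap.trace_prodMap' (σ g) (τ g)

/-- A nonzero representation contains an irreducible one. -/
lemma exists_irr_sub : ∀ (d : ℕ) (V : Type w) [AddCommGroup V] [Module K V]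
    [FiniteDimensional K V] [Nontrivial V] (σ : Representation K G V), finrank K V = d →
    ∃ W : Subrepresentation σ, IsIrreducible W.toRepresentation := by
  intro d V _ _ _ _ σ hd
  classical
  -- choose a nonzero subrepresentation of minimal dimension
  have hex : ∃ m, ∃ W : Subrepresentation σ, W ≠ ⊥ ∧ finrank K W.toSubmodule = m :=
    ⟨_, ⊤, by
      intro e
      have : (⊤ : Submodule K V) = ⊥ := congrArg Subrepresentation.toSubmodule e
      exact top_ne_bot this, rfl⟩
  obtain ⟨W, hW, hm⟩ := Nat.find_spec hex
  have hWne : W.toSubmodule ≠ ⊥ := fun e => hW (Subrepresentation.toSubmodule_injective e)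
  refine ⟨W, { exists_pair_ne := ⟨⊥, ⊤, ?_⟩, eq_bot_or_eq_top := ?_ }⟩
  · intro e
    have e : (⊥ : Submodule K W.toSubmodule) = ⊤ := congrArg Subrepresentation.toSubmodule e
    have : Nontrivial W.toSubmodule := Submodule.nontrivial_iff_ne_bot.mpr hWne
    exact bot_ne_top e
  · intro U
    by_cases hU : U = ⊥
    · exact Or.inl hU
    right
    let U' : Subrepresentation σ := ⟨U.toSubmodule.map W.toSubmodule.subtype, by
      rintro g _ ⟨x, hx, rfl⟩
      exact ⟨W.toRepresentation g x, U.apply_mem_toSubmodule g hx, rfl⟩⟩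
    have hU' : U' ≠ ⊥ := by
      intro e
      have e : U.toSubmodule.map W.toSubmodule.subtype = ⊥ :=
        congrArg Subrepresentation.toSubmodule e
      apply hU
      apply Subrepresentation.toSubmodule_injective
      exact Submodule.map_injective_of_injective W.toSubmodule.subtype_injective
        (e.trans (Submodule.map_bot _).symm)
    have h1 : Nat.find hex ≤ finrank K U.toSubmodule :=
      Nat.find_min' hex ⟨U', hU', LinearEquiv.finrank_eq
        (Submodule.equivMapOfInjective _ W.toSubmodule.subtype_injective U.toSubmodule).symm⟩
    apply Subrepresentation.toSubmodule_injective
    have h2 := Submodule.finrank_le U.toSubmodule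
    exact Submodule.eq_top_of_finrank_eq (by omega)

end Reps

section Split

variable {K : Type u} [Field K] [CharZero K] {G : Type v} [Group G] [Finite G]

/-- Maschke: an embedded representation splits off. -/
lemma exists_split {V W : Type w} [AddCommGroup V] [Module K V] [FiniteDimensional K V]
    [AddCommGroup W] [Module K W]
    (σ : Representation K G V) (τ : Representation K G W) (f : IntertwiningMap τ σ)
    (hf : Function.Injective f) :
    ∃ U : Subrepresentation σ, Nonempty (Representation.Equiv (τ.prod U.toRepresentation) σ) := by
  have : NeZero (Nat.card G : K) := ⟨by simp [Nat.card_pos.ne']⟩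
  obtain ⟨U, hU⟩ := exists_isCompl (f.range)
  refine ⟨U, ⟨Representation.Equiv.mk (LinearEquiv.ofBijective
    (f.toLinearMap.coprod U.toSubmodule.subtype) ⟨?_, ?_⟩) ?_⟩⟩
  · rw [← LinearMap.ker_eq_bot, LinearMap.ker_eq_bot']
    rintro ⟨w, u⟩ h
    have h : f w + (u : V) = 0 := h
    have hd := hU.inf_eq_bot
    have hd : f.range.toSubmodule ⊓ U.toSubmodule = ⊥ := congrArg Subrepresentation.toSubmodule hd
    have hm : f w ∈ f.range.toSubmodule ⊓ U.toSubmodule := by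
      refine ⟨⟨w, rfl⟩, ?_⟩
      rw [eq_neg_of_add_eq_zero_left h]
      exact neg_mem u.2
    rw [hd, Submodule.mem_bot] at hm
    have hw : w = 0 := hf (by rw [hm, map_zero])
    rw [hm, zero_add] at h
    ext1
    · exact hw
    · exact Subtype.ext h
  · intro x
    have hd : f.range.toSubmodule ⊔ U.toSubmodule = ⊤ :=
      congrArg Subrepresentation.toSubmodule hU.sup_eq_top
    have hx : x ∈ f.range.toSubmodule ⊔ U.toSubmodule := by rw [hd]; trivial
    obtain ⟨_, ⟨w, rfl⟩, u, hu, rfl⟩ := Submodule.mem_sup.mp hx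
    exact ⟨(w, ⟨u, hu⟩), rfl⟩
  · intro g
    refine LinearMap.ext fun x => ?_
    show f (τ g x.1) + σ g x.2 = σ g (f x.1 + x.2)
    rw [map_add, IntertwiningMap.isIntertwining _ _ f g x.1]

/-- A representation over a field of characteristic zero is determined by its character. -/
lemma equiv_of_char_eq : ∀ (d : ℕ) (V V' : Type w) [AddCommGroup V] [Module K V]
    [FiniteDimensional K V] [AddCommGroup V'] [Module K V'] [FiniteDimensional K V']
    (σ : Representation K G V) (σ' : Representation K G V'), finrank K V = d →
    σ.character = σ'.character → Nonempty (Representation.Equiv σ σ') := by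
  have := Fintype.ofFinite G
  have : Invertible (Nat.card G : K) := invertibleOfNonzero (by simp)
  intro d
  induction d using Nat.strong_induction_on with
  | _ d ih =>
  intro V V' _ _ _ _ _ _ σ σ' hd hχ
  have hdim : finrank K V = finrank K V' := by
    have := congrFun hχ 1
    rw [Representation.char_one, Representation.char_one] at this
    exact_mod_cast this
  rcases subsingleton_or_nontrivial V with hV | hV
  · have h0 : finrank K V' = 0 := by rw [← hdim]; exact finrank_zero_of_subsingleton
    have hV' : Subsingleton V' := finrank_zero_iff.mp h0
    exact ⟨Representation.Equiv.mk (LinearEquiv.ofFinrankEq V V' hdim)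
      (fun g => LinearMap.ext fun x => Subsingleton.elim _ _)⟩
  · obtain ⟨W, hW⟩ := exists_irr_sub d V σ hd
    let f : IntertwiningMap W.toRepresentation σ := ⟨W.toSubmodule.subtype, fun g => rfl⟩
    have hf : Function.Injective f := W.toSubmodule.subtype_injective
    have hWn : Nontrivial W.toSubmodule := by
      by_contra hcon
      rw [not_nontrivial_iff_subsingleton] at hcon
      exact (bot_ne_top (α := Subrepresentation W.toRepresentation))
        (Subrepresentation.toSubmodule_injective (Subsingleton.elim _ _))
    have hf0 : f ≠ 0 := by
      intro h
      obtain ⟨x, hx⟩ := exists_ne (0 : W.toSubmodule)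
      exact hx (hf (by rw [h]; simp))
    have e1 := card_inv_mul_sum_char_mul_char_eq_finrank W.toRepresentation σ
    have e2 := card_inv_mul_sum_char_mul_char_eq_finrank W.toRepresentation σ'
    rw [hχ, e2] at e1
    have e3 : finrank K (IntertwiningMap W.toRepresentation σ')
      = finrank K (IntertwiningMap W.toRepresentation σ) := by exact_mod_cast e1
    have fd1 : FiniteDimensional K (IntertwiningMap W.toRepresentation σ) :=
      Module.Finite.equiv (invariantsEquivIntertwiningMap W.toRepresentation σ)
    have e4 : 0 < finrank K (IntertwiningMap W.toRepresentation σ) :=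
      finrank_pos_iff_exists_ne_zero.mpr ⟨f, hf0⟩
    rw [← e3] at e4
    have fd2 : FiniteDimensional K (IntertwiningMap W.toRepresentation σ') :=
      Module.Finite.equiv (invariantsEquivIntertwiningMap W.toRepresentation σ')
    obtain ⟨f', hf'0⟩ := finrank_pos_iff_exists_ne_zero.mp e4
    have hf' : Function.Injective f' := (IsIrreducible.injective_or_eq_zero f').resolve_right hf'0
    obtain ⟨U, ⟨eU⟩⟩ := exists_split σ W.toRepresentation f hf
    have hd1 := eU.toLinearEquiv.finrank_eq
    rw [finrank_prod] at hd1
    have hpos : 0 < finrank K W.toSubmodule := finrank_pos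
    have c1 := char_iso eU
    rw [char_prod] at c1
    -- second splitting
    have key : ∃ (U' : Subrepresentation σ'),
        Nonempty (Representation.Equiv (W.toRepresentation.prod U'.toRepresentation) σ') :=
      exists_split σ' W.toRepresentation f' hf'
    obtain ⟨U', ⟨eU'⟩⟩ := key
    have c2 := char_iso eU'
    rw [char_prod] at c2
    have c3 : U.toRepresentation.character = U'.toRepresentation.character := by
      rw [← hχ, ← c1] at c2
      exact (add_left_cancel c2).symm
    obtain ⟨e⟩ := ih (finrank K U.toSubmodule) (by omega) _ _ U.toRepresentation
      U'.toRepresentation rfl c3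
    refine ⟨(eU.symm.trans (Representation.Equiv.mk
      ((LinearEquiv.refl K W.toSubmodule).prodCongr e.toLinearEquiv) ?_)).trans eU'⟩
    intro g
    ext x
    · simp [Representation.prod]
    · simp [Representation.prod]
    · simp [Representation.prod]
    · have := IntertwiningMap.isIntertwining _ _ e.toIntertwiningMap g x
      simpa [Representation.prod] using this

end Split

section Chars

variable {K : Type u} [Field K] {G : Type v} [Group G]

/-- `f` is the character of a representation over `K`. -/
def IsCh (f : G → K) : Prop := ∃ (n : ℕ) (ρ : G →* GL (Fin n) K), repChar ρ = f

/-- `f` is the character of an irreducible representation over `K`. -/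
def IsIrrCh (f : G → K) : Prop :=
  ∃ (n : ℕ) (ρ : G →* GL (Fin n) K), IsIrreducibleRep ρ ∧ repChar ρ = f

lemma IsIrrCh.isCh {f : G → K} (h : IsIrrCh f) : IsCh f := by
  obtain ⟨n, ρ, -, h⟩ := h
  exact ⟨n, ρ, h⟩

lemma isCh_character {V : Type w} [AddCommGroup V] [Module K V] [FiniteDimensional K V]
    (σ : Representation K G V) : IsCh σ.character := by
  obtain ⟨ρ, ⟨e⟩⟩ := exists_matrix σ
  exact ⟨_, ρ, by rw [char_iso e, toRep_character]⟩

lemma isIrrCh_character {V : Type w} [AddCommGroup V] [Module K V] [FiniteDimensional K V]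
    (σ : Representation K G V) [IsIrreducible σ] : IsIrrCh σ.character := by
  obtain ⟨ρ, ⟨e⟩⟩ := exists_matrix σ
  exact ⟨_, ρ, isIrreducibleRep_of_equiv σ ρ e, by rw [char_iso e, toRep_character]⟩

lemma isCh_zero : IsCh (0 : G → K) :=
  ⟨0, 1, by ext g; simp [repChar]⟩

lemma IsCh.add {f h : G → K} (hf : IsCh f) (hh : IsCh h) : IsCh (f + h) := by
  obtain ⟨n, ρ, rfl⟩ := hf
  obtain ⟨m, τ, rfl⟩ := hh
  rw [← toRep_character, ← toRep_character, ← char_prod]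
  exact isCh_character _

/-- Base change of a matrix representation. -/
noncomputable def bc {F : Type w} [Field F] (j : K →+* F) {n : ℕ} (ρ : G →* GL (Fin n) K) :
    G →* GL (Fin n) F := (Units.map (j.mapMatrix).toMonoidHom).comp ρ

lemma repChar_bc {F : Type w} [Field F] (j : K →+* F) {n : ℕ} (ρ : G →* GL (Fin n) K) :
    repChar (bc j ρ) = j ∘ repChar ρ := by
  ext g
  simp [repChar, bc, Matrix.trace]

lemma IsCh.map {F : Type w} [Field F] (j : K →+* F) {f : G → K} (hf : IsCh f) :
    IsCh (j ∘ f) := by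
  obtain ⟨n, ρ, rfl⟩ := hf
  exact ⟨n, bc j ρ, repChar_bc j ρ⟩

lemma trace_restrictScalars {F : Type w} [Field F] [Algebra K F] [FiniteDimensional K F] {n : ℕ}
    (f : (Fin n → F) →ₗ[F] (Fin n → F)) :
    LinearMap.trace K (Fin n → F) (f.restrictScalars K)
      = Algebra.trace K F (LinearMap.trace F (Fin n → F) f) := by
  classical
  let b := Module.finBasis K F
  let c := Pi.basisFun F (Fin n)
  rw [LinearMap.trace_eq_matrix_trace K (b.smulTower c), LinearMap.trace_eq_matrix_trace F c]
  simp only [Matrix.trace, Matrix.diag, map_sum, LinearMap.toMatrix_apply]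
  rw [Fintype.sum_prod_type, Finset.sum_comm]
  refine Finset.sum_congr rfl fun i _ => ?_
  rw [Algebra.trace_eq_matrix_trace b]
  simp only [Matrix.trace, Matrix.diag, Algebra.leftMulMatrix_eq_repr_mul]
  refine Finset.sum_congr rfl fun j _ => ?_
  simp [Basis.smulTower_repr, Basis.smulTower_apply, mul_comm]

/-- Restriction of scalars. -/
lemma IsCh.trace {F : Type w} [Field F] [Algebra K F] [FiniteDimensional K F]
    {f : G → F} (hf : IsCh f) : IsCh (fun g => Algebra.trace K F (f g)) := by
  obtain ⟨n, ρ, rfl⟩ := hf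
  let σ : Representation K G (Fin n → F) :=
    { toFun := fun g => (toRep ρ g).restrictScalars K
      map_one' := by ext; simp
      map_mul' := fun g h => by ext; simp }
  have : FiniteDimensional K (Fin n → F) := inferInstance
  have h := isCh_character σ
  convert h using 1
  ext g
  rw [← toRep_character]
  exact (trace_restrictScalars (toRep ρ g)).symm

/-- The pairing of class functions. -/
noncomputable def ip [Fintype G] (f h : G → K) : K := (Nat.card G : K)⁻¹ * ∑ g : G, f g * h g⁻¹

lemma ip_map [Fintype G] {F : Type w} [Field F] (j : K →+* F) (f h : G → K) :
    ip (j ∘ f) (j ∘ h) = j (ip f h) := by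
  simp [ip]

lemma ip_add_left [Fintype G] (f f' h : G → K) : ip (f + f') h = ip f h + ip f' h := by
  simp [ip, add_mul, Finset.sum_add_distrib, mul_add]

lemma ip_comm [Fintype G] (f h : G → K) : ip f h = ip h f := by
  unfold ip
  congr 1
  rw [← Equiv.sum_comp (Equiv.inv G)]
  simp [mul_comm]

lemma ip_zero_left [Fintype G] (h : G → K) : ip 0 h = 0 := by simp [ip]

lemma ip_sum_left [Fintype G] (s : Multiset (G → K)) (h : G → K) :
    ip s.sum h = (s.map (fun f => ip f h)).sum := by
  induction s using Multiset.induction_on with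
  | empty => simp [ip_zero_left]
  | cons a s ih => simp [ip_add_left, ih]

end Chars

section Decomp

variable {K : Type u} [Field K] [CharZero K] {G : Type v} [Group G] [Finite G]

lemma decomp_aux : ∀ (d : ℕ) (V : Type w) [AddCommGroup V] [Module K V]
    [FiniteDimensional K V] (σ : Representation K G V), finrank K V = d →
    ∃ s : Multiset (G → K), (∀ f ∈ s, IsIrrCh f) ∧ s.sum = σ.character := by
  intro d
  induction d using Nat.strong_induction_on with
  | _ d ih =>
  intro V _ _ _ σ hd
  rcases subsingleton_or_nontrivial V with hV | hV
  · refine ⟨0, by simp, ?_⟩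
    ext g
    have : σ g = 0 := LinearMap.ext fun x => Subsingleton.elim _ _
    simp [Representation.character, this]
  · obtain ⟨W, hW⟩ := exists_irr_sub d V σ hd
    have hWn : Nontrivial W.toSubmodule := by
      by_contra hcon
      rw [not_nontrivial_iff_subsingleton] at hcon
      exact (bot_ne_top (α := Subrepresentation W.toRepresentation))
        (Subrepresentation.toSubmodule_injective (Subsingleton.elim _ _))
    let f : IntertwiningMap W.toRepresentation σ := ⟨W.toSubmodule.subtype, fun g => rfl⟩
    obtain ⟨U, ⟨eU⟩⟩ := exists_split σ W.toRepresentation f W.toSubmodule.subtype_injective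
    have hd1 := eU.toLinearEquiv.finrank_eq
    rw [finrank_prod] at hd1
    have hpos : 0 < finrank K W.toSubmodule := finrank_pos
    obtain ⟨s, hs, hsum⟩ := ih (finrank K U.toSubmodule) (by omega) _ U.toRepresentation rfl
    refine ⟨W.toRepresentation.character ::ₘ s, ?_, ?_⟩
    · intro f hf
      rcases Multiset.mem_cons.mp hf with rfl | hf
      · exact isIrrCh_character _
      · exact hs f hf
    · rw [Multiset.sum_cons, hsum, ← char_prod, char_iso eU]

lemma IsCh.decomp {f : G → K} (hf : IsCh f) :
    ∃ s : Multiset (G → K), (∀ f ∈ s, IsIrrCh f) ∧ s.sum = f := by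
  obtain ⟨n, ρ, rfl⟩ := hf
  rw [← toRep_character]
  exact decomp_aux _ _ (toRep ρ) rfl

variable (K G) in
/-- The character of the regular representation. -/
lemma isCh_regular [DecidableEq G] :
    IsCh (fun g : G => if g = 1 then (Nat.card G : K) else 0) := by
  have := Fintype.ofFinite G
  let σ : Representation K G (G → K) :=
    { toFun := fun g => LinearMap.funLeft K K (fun h => h * g)
      map_one' := by ext; simp [LinearMap.funLeft]
      map_mul' := fun g h => by
        refine LinearMap.ext fun f => funext fun x => ?_
        simp [LinearMap.funLeft, mul_assoc] }
  have h := isCh_character σ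
  convert h using 1
  ext g
  rw [Representation.character, LinearMap.trace_eq_matrix_trace K (Pi.basisFun K G)]
  simp only [Matrix.trace, Matrix.diag, LinearMap.toMatrix_apply]
  have h1 : ∀ x : G, ((Pi.basisFun K G).repr (σ g (Pi.basisFun K G x))) x
      = if g = 1 then (1 : K) else 0 := by
    intro x
    have h2 : ((Pi.basisFun K G).repr (σ g (Pi.basisFun K G x))) x
      = (Pi.single x (1 : K) : G → K) (x * g) := by simp [σ, LinearMap.funLeft]
    rw [h2, Pi.single_apply]
    simp
  simp only [h1]
  simp

end Decomp

section Closed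

variable {Ω : Type u} [Field Ω] [CharZero Ω] [IsAlgClosed Ω] {G : Type v} [Group G] [Fintype G]

lemma ip_self {f : G → Ω} (hf : IsIrrCh f) : ip f f = 1 := by
  have : Invertible (Nat.card G : Ω) := invertibleOfNonzero (by simp)
  obtain ⟨n, ρ, hρ, rfl⟩ := hf
  have := isIrreducible_toRep ρ hρ
  have h := char_orthonormal (toRep ρ) (toRep ρ)
  rw [if_pos ⟨Representation.Equiv.refl _⟩, toRep_character] at h
  exact h

open Classical in
lemma ip_irr {f h : G → Ω} (hf : IsIrrCh f) (hh : IsIrrCh h) :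
    ip f h = if h = f then 1 else 0 := by
  split_ifs with heq
  · rw [heq]; exact ip_self hf
  · have : Invertible (Nat.card G : Ω) := invertibleOfNonzero (by simp)
    obtain ⟨n, ρ, hρ, rfl⟩ := hf
    obtain ⟨m, τ, hτ, rfl⟩ := hh
    have := isIrreducible_toRep ρ hρ
    have := isIrreducible_toRep τ hτ
    have h := char_orthonormal (toRep ρ) (toRep τ)
    rw [if_neg, toRep_character, toRep_character] at h
    · exact h
    · rintro ⟨e⟩
      apply heq
      rw [← toRep_character, ← toRep_character, char_iso e]

open Classical in
lemma ip_sum_irr {s : Multiset (G → Ω)} (hs : ∀ f ∈ s, IsIrrCh f) {h : G → Ω} (hh : IsIrrCh h) :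
    ip s.sum h = (s.count h : Ω) := by
  induction s using Multiset.induction_on with
  | empty => simp [ip_zero_left]
  | cons a s ih =>
    rw [Multiset.sum_cons, ip_add_left, ih fun f hf => hs f (Multiset.mem_cons_of_mem hf),
      ip_irr (hs a (Multiset.mem_cons_self a s)) hh, Multiset.count_cons]
    push_cast
    rw [add_comm]

lemma isIrrCh_of_norm_one {f : G → Ω} (hf : IsCh f) (h1 : ip f f = 1) : IsIrrCh f := by
  classical
  obtain ⟨s, hs, rfl⟩ := hf.decomp
  rw [ip_sum_left] at h1
  have e : s.map (fun f => ip f s.sum) = s.map (fun f => ((s.count f : ℕ) : Ω)) :=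
    Multiset.map_congr rfl fun f hf => by rw [ip_comm, ip_sum_irr hs (hs f hf)]
  rw [e] at h1
  have h2 : (s.map (fun f => s.count f)).sum = 1 := by
    have : (((s.map (fun f => s.count f)).sum : ℕ) : Ω) = 1 := by
      rw [← h1]; simp [Multiset.map_map]
    exact_mod_cast this
  have h3 : s.card ≤ 1 := by
    rw [← h2]
    have := Multiset.card_nsmul_le_sum (s := s.map (fun f => s.count f)) (a := 1) (by
      intro x hx
      obtain ⟨f, hf, rfl⟩ := Multiset.mem_map.mp hx
      exact Multiset.one_le_count_iff_mem.mpr hf)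
    simpa using this
  have h4 : s ≠ 0 := by rintro rfl; simp at h2
  have h5 : s.card = 1 := by
    have := Multiset.card_pos.mpr h4
    omega
  obtain ⟨a, rfl⟩ := Multiset.card_eq_one.mp h5
  simpa using hs

/-- All irreducible characters are defined over any algebraically closed subfield. -/
lemma exists_irr_lift {C : Type w} [Field C] [CharZero C] [IsAlgClosed C] (j : C →+* Ω)
    {φ : G → Ω} (hφ : IsIrrCh φ) : ∃ l : G → C, IsIrrCh l ∧ j ∘ l = φ := by
  classical
  obtain ⟨s, hs, hsum⟩ := (isCh_regular C G).decomp
  have hirr : ∀ f ∈ s, IsIrrCh (j ∘ f) := fun f hf =>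
    isIrrCh_of_norm_one ((hs f hf).isCh.map j) (by rw [ip_map, ip_self (hs f hf), map_one])
  have hs' : ∀ f ∈ s.map (fun f => j ∘ f), IsIrrCh f := by
    intro f hf
    obtain ⟨x, hx, rfl⟩ := Multiset.mem_map.mp hf
    exact hirr x hx
  have hsum' : (s.map (fun f => j ∘ f)).sum = fun g : G => if g = 1 then (Nat.card G : Ω) else 0 := by
    have h1 : j ∘ s.sum = (s.map (fun f => j ∘ f)).sum := by
      clear hs hirr hs' hsum
      induction s using Multiset.induction_on with
      | empty => ext; simp
      | cons a s ih =>
        rw [Multiset.map_cons, Multiset.sum_cons, Multiset.sum_cons, ← ih]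
        ext; simp
    rw [← h1, hsum]
    ext g
    simp only [Function.comp]
    split_ifs <;> simp
  have h2 := ip_sum_irr hs' hφ
  rw [hsum'] at h2
  have h3 : ip (fun g : G => if g = 1 then (Nat.card G : Ω) else 0) φ = φ 1 := by
    simp [ip]
  rw [h3] at h2
  have h4 : φ 1 ≠ 0 := by
    obtain ⟨n, ρ, ⟨hn, -⟩, rfl⟩ := hφ
    simp [repChar, hn.ne']
  have h5 : φ ∈ s.map (fun f => j ∘ f) := by
    rw [← Multiset.count_ne_zero]
    intro h
    rw [h] at h2
    exact h4 (by simpa using h2)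
  obtain ⟨l, hl, e⟩ := Multiset.mem_map.mp h5
  exact ⟨l, hs l hl, e⟩

end Closed

section Core

variable {K : Type u} [Field K] [CharZero K] {Ω : Type w} [Field Ω] [CharZero Ω] [IsAlgClosed Ω]
  [Algebra K Ω] {G : Type v} [Group G] [Fintype G]

lemma core
    (hIntegral : ∀ φ : G → Ω, IsIrrCh φ → ∀ g, IsIntegral K (φ g))
    (hreal : ∀ φ : G → Ω, IsIrrCh φ →
      ∃ φ' : G → IntermediateField.adjoin K (Set.range φ), IsCh φ' ∧ ∀ g, (φ' g : Ω) = φ g) :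
    ∀ (d : ℕ) (s : Multiset (G → Ω)) (f : G → K), s.card = d → (∀ φ ∈ s, IsIrrCh φ) →
      algebraMap K Ω ∘ f = s.sum → IsCh f := by
  classical
  intro d
  induction d using Nat.strong_induction_on with
  | _ d ih =>
  intro s f hd hs hf
  rcases Multiset.empty_or_exists_mem s with rfl | ⟨φ, hφ⟩
  · have : f = 0 := by
      ext g
      have := congrFun hf g
      simpa using this
    rw [this]
    exact isCh_zero
  · have hr := hreal φ (hs φ hφ)
    obtain ⟨F, hF⟩ : ∃ F, F = IntermediateField.adjoin K (Set.range φ) := ⟨_, rfl⟩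
    rw [← hF] at hr
    obtain ⟨φ', hch, hφ'⟩ := hr
    have hfd : FiniteDimensional K F := by
      rw [hF]
      exact IntermediateField.finiteDimensional_adjoin (by
        rintro _ ⟨g, rfl⟩
        exact hIntegral φ (hs φ hφ) g)
    have hval : (F.val : F →+* Ω) ∘ φ' = φ := funext hφ'
    have hip1 : ip φ' φ' = 1 := by
      apply (F.val : F →+* Ω).injective
      rw [← ip_map, hval, ip_self (hs φ hφ), map_one]
    have hip2 : ip (algebraMap K F ∘ f) φ' = (s.count φ : F) := by
      apply (F.val : F →+* Ω).injective
      rw [← ip_map, hval, map_natCast, ← ip_sum_irr hs (hs φ hφ), ← hf]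
      rfl
    have hirr : ∀ σ : F →ₐ[K] Ω, IsIrrCh ((σ : F →+* Ω) ∘ φ') := fun σ =>
      isIrrCh_of_norm_one (hch.map _) (by rw [ip_map, hip1, map_one])
    have hcount : ∀ σ : F →ₐ[K] Ω, s.count ((σ : F →+* Ω) ∘ φ') = s.count φ := by
      intro σ
      have h1 := ip_sum_irr hs (hirr σ)
      have h2 : s.sum = (σ : F →+* Ω) ∘ (algebraMap K F ∘ f) := by
        rw [← hf]
        ext g
        simp
      rw [h2, ip_map, hip2, map_natCast] at h1
      exact_mod_cast h1.symm
    have hinj : Function.Injective (fun σ : F →ₐ[K] Ω => (σ : F →+* Ω) ∘ φ') := by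
      intro σ τ h
      refine IntermediateField.algHom_ext_of_eq_adjoin _ hF ?_
      rintro x ⟨g, rfl⟩
      have h1 := congrFun h g
      have h2 : φ' g = ⟨φ g, hF.ge (IntermediateField.subset_adjoin _ _ ⟨g, rfl⟩)⟩ :=
        Subtype.ext (hφ' g)
      rw [← h2]
      exact h1
    let t : Multiset (G → Ω) :=
      (Finset.univ : Finset (F →ₐ[K] Ω)).val.map (fun σ : F →ₐ[K] Ω => (σ : F →+* Ω) ∘ φ')
    have htn : t.Nodup := Multiset.Nodup.map hinj Finset.univ.nodup
    have hts : t ≤ s := by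
      rw [Multiset.le_iff_subset htn]
      intro x hx
      obtain ⟨σ, -, rfl⟩ := Multiset.mem_map.mp hx
      rw [← Multiset.count_pos, hcount σ]
      exact Multiset.count_pos.mpr hφ
    obtain ⟨r, rfl⟩ := Multiset.le_iff_exists_add.mp hts
    have htsum : t.sum = algebraMap K Ω ∘ (fun g => Algebra.trace K F (φ' g)) := by
      ext g
      simp only [Function.comp]
      rw [trace_eq_sum_embeddings Ω]
      have : t.sum = ∑ σ : F →ₐ[K] Ω, ((σ : F →+* Ω) ∘ φ') := rfl
      rw [this, Finset.sum_apply]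
      rfl
    have htcard : 0 < t.card := by
      rw [Multiset.card_pos]
      intro h0
      have : F.val ∈ (Finset.univ : Finset (F →ₐ[K] Ω)).val := Finset.mem_univ _
      have := Multiset.mem_map_of_mem (fun σ : F →ₐ[K] Ω => (σ : F →+* Ω) ∘ φ') this
      change _ ∈ t at this
      rw [h0] at this
      simp at this
    rw [Multiset.card_add] at hd
    have hrec := ih r.card (by omega) r (f - fun g => Algebra.trace K F (φ' g)) rfl
      (fun x hx => hs x (Multiset.mem_add.mpr (Or.inr hx))) (by
        have h1 : algebraMap K Ω ∘ (f - fun g => Algebra.trace K F (φ' g))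
          = algebraMap K Ω ∘ f - algebraMap K Ω ∘ (fun g => Algebra.trace K F (φ' g)) := by
          ext g; simp
        rw [h1, hf, Multiset.sum_add, ← htsum]
        simp)
    have := hrec.add (hch.trace (K := K))
    simpa using this

end Core

end EdZero

/-- Let `k` be a field of characteristic `0` with algebraic closure `k̄` and `G` a finite
group.  Assume every irreducible representation `λ` of `G` over `k̄` can be realized over
the field `k(χ_λ)` generated over `k` by the values of its character (i.e. all Schur
indices are `1`).  Then every representation `ρ` of `G` over any extension `L/k`, with
character `χ`, descends to `k(χ)`, which is algebraic over `k`; in particular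
`ed(ρ) = 0`. -/
theorem ed_zero_of_schur_indices_one {k : Type*} [Field k] [CharZero k]
    {G : Type*} [Group G] [Finite G]
    (hschur : ∀ (m : ℕ) (lam : G →* GL (Fin m) (AlgebraicClosure k)),
      IsIrreducibleRep lam →
        Descends lam (IntermediateField.adjoin k (Set.range (repChar lam))))
    (L : Type*) [Field L] [Algebra k L] (n : ℕ) (ρ : G →* GL (Fin n) L) :
    Descends ρ (IntermediateField.adjoin k (Set.range (repChar ρ))) ∧
    Algebra.IsAlgebraic k (IntermediateField.adjoin k (Set.range (repChar ρ))) := by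
  classical
  have := Fintype.ofFinite G
  have hcL : CharZero L := charZero_of_injective_algebraMap (algebraMap k L).injective
  let C := AlgebraicClosure k
  let Ω := AlgebraicClosure L
  have hcC : CharZero C := charZero_of_injective_algebraMap (algebraMap k C).injective
  have hcΩ : CharZero Ω := charZero_of_injective_algebraMap (algebraMap L Ω).injective
  let j : C →ₐ[k] Ω := IsAlgClosed.lift
  have hIntegral : ∀ φ : G → Ω, EdZero.IsIrrCh φ → ∀ g, IsIntegral k (φ g) := by
    intro φ hφ g
    obtain ⟨l, hl, rfl⟩ := EdZero.exists_irr_lift (j : C →+* Ω) hφ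
    exact (Algebra.IsIntegral.isIntegral (R := k) (l g)).map j
  obtain ⟨s, hs, hsum⟩ : ∃ s : Multiset (G → Ω), (∀ f ∈ s, EdZero.IsIrrCh f) ∧
      s.sum = algebraMap L Ω ∘ repChar ρ :=
    EdZero.IsCh.decomp (EdZero.IsCh.map (algebraMap L Ω) ⟨n, ρ, rfl⟩)
  have hIntegralChar : ∀ g, IsIntegral k (repChar ρ g) := by
    intro g
    have h1 : IsIntegral k (s.sum g) := by
      clear hsum
      induction s using Multiset.induction_on with
      | empty => simpa using isIntegral_zero
      | cons a s ih =>
        rw [Multiset.sum_cons]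
        exact (hIntegral a (hs a (Multiset.mem_cons_self a s)) g).add
          (ih fun f hf => hs f (Multiset.mem_cons_of_mem hf))
    rw [hsum] at h1
    exact (isIntegral_algebraMap_iff (algebraMap L Ω).injective).mp h1
  refine ⟨?_, IntermediateField.isAlgebraic_adjoin (by rintro _ ⟨g, rfl⟩; exact hIntegralChar g)⟩
  set K₀ := IntermediateField.adjoin k (Set.range (repChar ρ)) with hK₀
  let f : G → K₀ := fun g => ⟨repChar ρ g, IntermediateField.subset_adjoin _ _ ⟨g, rfl⟩⟩
  have hcK : CharZero K₀ := charZero_of_injective_algebraMap (algebraMap k K₀).injective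
  have hreal : ∀ φ : G → Ω, EdZero.IsIrrCh φ →
      ∃ φ' : G → IntermediateField.adjoin K₀ (Set.range φ),
        EdZero.IsCh φ' ∧ ∀ g, (φ' g : Ω) = φ g := by
    intro φ hφ
    obtain ⟨l, ⟨m, lam, hlam, rfl⟩, rfl⟩ := EdZero.exists_irr_lift (j : C →+* Ω) hφ
    have hdes := hschur m lam hlam
    set F₀ := IntermediateField.adjoin k (Set.range (repChar lam)) with hF₀
    obtain ⟨μ, M, hM⟩ := hdes
    set F := IntermediateField.adjoin K₀ (Set.range ((j : C →+* Ω) ∘ repChar lam)) with hF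
    have hmem : ∀ x : F₀, j x ∈ F := by
      have h1 : F₀ ≤ (F.restrictScalars k).comap j := by
        rw [hF₀, IntermediateField.adjoin_le_iff]
        rintro _ ⟨g, rfl⟩
        exact IntermediateField.subset_adjoin K₀ _ ⟨g, rfl⟩
      exact fun x => h1 x.2
    let i : F₀ →+* F := ((j : C →+* Ω).comp F₀.val.toRingHom).codRestrict F hmem
    refine ⟨i ∘ repChar μ, EdZero.IsCh.map i ⟨m, μ, rfl⟩, ?_⟩
    intro g
    have h1 : repChar lam g = ((repChar μ g : F₀) : C) := by
      have h2 : repChar (EdZero.bc (algebraMap F₀ C) μ) g = repChar lam g := by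
        unfold repChar
        rw [hM g]
        simp only [Units.val_mul]
        rw [Matrix.trace_mul_comm, ← mul_assoc]
        simp [EdZero.bc]
        rfl
      rw [← h2, EdZero.repChar_bc]
      rfl
    show j ((repChar μ g : F₀) : C) = j (repChar lam g)
    rw [h1]
  obtain ⟨m, ρ', hρ'⟩ := EdZero.core (K := K₀) (Ω := Ω)
    (fun φ hφ g => (hIntegral φ hφ g).tower_top) hreal s.card s f rfl hs (by rw [hsum]; rfl)
  have hmn : m = n := by
    have h1 : ((repChar ρ' 1 : K₀) : L) = repChar ρ 1 := by rw [hρ']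
    simpa [repChar] using h1
  subst hmn
  have hχ : (EdZero.toRep ρ).character
      = (EdZero.toRep (EdZero.bc (algebraMap K₀ L) ρ')).character := by
    rw [EdZero.toRep_character, EdZero.toRep_character, EdZero.repChar_bc, hρ']
    rfl
  obtain ⟨e⟩ := EdZero.equiv_of_char_eq _ _ _ _ _ rfl hχ.symm
  let E : GL (Fin m) L := Matrix.GeneralLinearGroup.toLin.symm
    (LinearMap.GeneralLinearGroup.ofLinearEquiv e.toLinearEquiv)
  have hE : ∀ v, (E : Matrix (Fin m) (Fin m) L).mulVec v = e v := by
    intro v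
    have h1 : Matrix.mulVecLin (E : Matrix (Fin m) (Fin m) L) = e.toLinearEquiv.toLinearMap := by
      rw [← Matrix.GeneralLinearGroup.coe_toLin]
      simp only [E, MulEquiv.apply_symm_apply]
      rfl
    exact LinearMap.congr_fun h1 v
  refine ⟨ρ', E, fun g => ?_⟩
  rw [eq_mul_inv_iff_mul_eq]
  refine Units.ext (Matrix.ext_of_mulVec_single fun i => ?_)
  rw [Units.val_mul, Units.val_mul, ← Matrix.mulVec_mulVec, ← Matrix.mulVec_mulVec, hE, hE,
    ← EdZero.toRep_apply]
  have h2 := Representation.IntertwiningMap.isIntertwining _ _ e.toIntertwiningMap g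
    (Pi.single i 1)
  rw [EdZero.toRep_apply] at h2
  exact h2.symm
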